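/- The action of Γ_Q on R(Q,−k) by left multiplication has only finitely many orbits; that is, there is a finite subset F of R(Q,−k) such that every x ∈ R(Q,−k) equals g·y for some g ∈ Γ_Q and some y ∈ F. -/

import Mathlib

open Matrix

/-!
For `Q[x] = -k`, replacing `Q` by `-Q` on the line spanned by `x` turns the form of signature
`(n, 1)` into a positive definite one, the majorant. Scaled by `k` it is
`H_x[v] = k Q[v] + 2 |⟨x, v⟩|²`, an integral form whose determinant depends on `x` at most by its
sign. By Hermite reduction there are a constant `B`, depending only on `Q` and `k`, and a unimodular
`U`, depending on `x`, such that the diagonal entries of `U* H_x U` are at most `B`. Cauchy–Schwarz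
then bounds all its entries, and `|⟨x, v⟩|² ≤ H_x[v]` bounds the entries of `U* Q x`, so the pair
`(U* H_x U, U* Q x)` takes finitely many values. If `(x, U)` and `(y, V)` give the same pair, then
`U* Q U = V* Q V`, and `U V⁻¹` is an isometry of `Q` that sends `y` to `x`.
-/

local notation "ℤ[i]" => GaussianInt

section HermitianForms

variable {R ι κ : Type*} [CommRing R] [StarRing R] [Fintype ι]

theorem star_star_dotProduct_mulVec {Q : Matrix ι ι R} (hQ : Q.IsHermitian) (x y : ι → R) :
    star (star x ⬝ᵥ Q *ᵥ y) = star y ⬝ᵥ Q *ᵥ x := by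
  rw [← star_dotProduct_star, star_star, star_mulVec, hQ.eq, dotProduct_comm, dotProduct_mulVec,
    dotProduct_comm]

theorem star_mulVec_dotProduct_mulVec [Fintype κ] (Q : Matrix ι ι R) (U : Matrix ι κ R)
    (x y : κ → R) : star (U *ᵥ x) ⬝ᵥ Q *ᵥ (U *ᵥ y) = star x ⬝ᵥ (Uᴴ * Q * U) *ᵥ y := by
  rw [star_mulVec, ← dotProduct_mulVec, mulVec_mulVec, mulVec_mulVec, Matrix.mul_assoc]

theorem star_single_dotProduct_mulVec_single [DecidableEq ι] (Q : Matrix ι ι R) (i j : ι) :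
    star (Pi.single i 1) ⬝ᵥ Q *ᵥ Pi.single j 1 = Q i j := by
  rw [← Pi.single_star]
  simp

theorem conjTranspose_submatrix_id_mul_mul (Q U : Matrix ι ι R) (σ : κ → ι) :
    (U.submatrix id σ)ᴴ * Q * U.submatrix id σ = (Uᴴ * Q * U).submatrix σ σ :=
  rfl

theorem dotProduct_mulVec_smul_sub_smul {Q : Matrix ι ι R} (hQ : Q.IsHermitian) (x y : ι → R) :
    let u := (star y ⬝ᵥ Q *ᵥ y) • x - (star y ⬝ᵥ Q *ᵥ x) • y
    star u ⬝ᵥ Q *ᵥ u = (star y ⬝ᵥ Q *ᵥ y) *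
      ((star x ⬝ᵥ Q *ᵥ x) * (star y ⬝ᵥ Q *ᵥ y) -
        star (star y ⬝ᵥ Q *ᵥ x) * (star y ⬝ᵥ Q *ᵥ x)) := by
  simp only [star_sub, star_smul, mulVec_sub, mulVec_smul, sub_dotProduct, dotProduct_sub,
    smul_dotProduct, dotProduct_smul, smul_eq_mul, star_star_dotProduct_mulVec hQ]
  ring

theorem dotProduct_mulVec_smul_sub_smul_of_orthogonal {Q : Matrix ι ι R} (hQ : Q.IsHermitian)
    {x y : ι → R} (hxy : star x ⬝ᵥ Q *ᵥ y = 0) (b c : R) :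
    star (b • y - c • x) ⬝ᵥ Q *ᵥ (b • y - c • x) =
      star b * b * (star y ⬝ᵥ Q *ᵥ y) + star c * c * (star x ⬝ᵥ Q *ᵥ x) := by
  have hyx : star y ⬝ᵥ Q *ᵥ x = 0 := by rw [← star_star_dotProduct_mulVec hQ, hxy, star_zero]
  simp only [star_sub, star_smul, mulVec_sub, mulVec_smul, sub_dotProduct, dotProduct_sub,
    smul_dotProduct, dotProduct_smul, smul_eq_mul, hxy, hyx]
  ring

end HermitianForms

section GaussianIntegers

theorem star_mul_self_eq_norm (z : ℤ[i]) : star z * z = (z.norm : ℤ[i]) := by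
  rw [Zsqrtd.norm_eq_mul_conj, mul_comm]

theorem eq_intCast_re_of_star_eq {z : ℤ[i]} (hz : star z = z) : z = (z.re : ℤ[i]) := by
  have him := congrArg Zsqrtd.im hz
  rw [Zsqrtd.im_star] at him
  ext
  · simp
  · simp only [Zsqrtd.im_intCast]
    lia

theorem finite_setOf_norm_le (B : ℤ) : {z : ℤ[i] | z.norm ≤ B}.Finite := by
  refine ((Set.finite_Icc (-B) B).image2 (fun a b => (⟨a, b⟩ : ℤ[i]))
    (Set.finite_Icc (-B) B)).subset fun z (hz : z.norm ≤ B) => ?_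
  rw [Zsqrtd.norm_def] at hz
  have hre : |z.re| ≤ z.re ^ 2 := sq_abs z.re ▸ Int.le_self_sq _
  have him : |z.im| ≤ z.im ^ 2 := sq_abs z.im ▸ Int.le_self_sq _
  exact ⟨z.re, abs_le.1 (by nlinarith), z.im, abs_le.1 (by nlinarith), rfl⟩

theorem exists_two_mul_abs_add_mul_le {m : ℤ} (hm : 0 < m) (r : ℤ) :
    ∃ q : ℤ, 2 * |r + m * q| ≤ m := by
  refine ⟨-((2 * r + m) / (2 * m)), ?_⟩
  have hdiv := Int.emod_add_mul_ediv (2 * r + m) (2 * m)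
  have hnonneg := Int.emod_nonneg (2 * r + m) (b := 2 * m) (by lia)
  have hlt := Int.emod_lt_of_pos (2 * r + m) (b := 2 * m) (by lia)
  cases abs_cases (r + m * -((2 * r + m) / (2 * m))) <;> linarith

theorem exists_two_mul_norm_add_mul_le {m : ℤ} (hm : 0 < m) (b : ℤ[i]) :
    ∃ c : ℤ[i], 2 * (b + m * c).norm ≤ m ^ 2 := by
  obtain ⟨p, hp⟩ := exists_two_mul_abs_add_mul_le hm b.re
  obtain ⟨q, hq⟩ := exists_two_mul_abs_add_mul_le hm b.im
  refine ⟨⟨p, q⟩, ?_⟩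
  have hp2 := mul_self_le_mul_self (by positivity) hp
  have hq2 := mul_self_le_mul_self (by positivity) hq
  have hnorm : (b + m * ⟨p, q⟩ : ℤ[i]).norm = |b.re + m * p| ^ 2 + |b.im + m * q| ^ 2 := by
    simp only [Zsqrtd.norm_def, Zsqrtd.re_add, Zsqrtd.im_add, Zsqrtd.re_smul, Zsqrtd.im_smul,
      sq_abs]
    ring
  linarith

end GaussianIntegers

section PosDef

variable {ι κ : Type*} [Fintype ι] [Fintype κ]

/-- Positive definite Hermitian matrices over the Gaussian integers. `Matrix.PosDef` does not
apply, because `GaussianInt` carries no order. -/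
structure IsPosDef (H : Matrix ι ι ℤ[i]) : Prop where
  isHermitian : H.IsHermitian
  pos : ∀ x ≠ 0, 0 < (star x ⬝ᵥ H *ᵥ x).re

theorem dotProduct_mulVec_eq_intCast_re {H : Matrix ι ι ℤ[i]} (hH : H.IsHermitian)
    (x : ι → ℤ[i]) : star x ⬝ᵥ H *ᵥ x = ((star x ⬝ᵥ H *ᵥ x).re : ℤ[i]) :=
  eq_intCast_re_of_star_eq (star_star_dotProduct_mulVec hH x x)

namespace IsPosDef

variable {H : Matrix ι ι ℤ[i]}

theorem nonneg (hH : IsPosDef H) (x : ι → ℤ[i]) : 0 ≤ (star x ⬝ᵥ H *ᵥ x).re := by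
  obtain rfl | hx := eq_or_ne x 0
  · simp
  · exact (hH.pos x hx).le

theorem conjTranspose_mul_mul (hH : IsPosDef H) {U : Matrix ι κ ℤ[i]}
    (hU : Function.Injective U.mulVec) : IsPosDef (Uᴴ * H * U) where
  isHermitian := isHermitian_conjTranspose_mul_mul U hH.isHermitian
  pos x hx := by
    rw [← star_mulVec_dotProduct_mulVec]
    exact hH.pos _ fun h => hx (hU (h.trans (mulVec_zero U).symm))

theorem submatrix (hH : IsPosDef H) {e : κ → ι} (he : Function.Injective e) :
    IsPosDef (H.submatrix e e) := by
  classical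
  have hinj : Function.Injective ((1 : Matrix ι ι ℤ[i]).submatrix id e).mulVec := by
    intro x y hxy
    ext1 j
    simpa [mulVec, dotProduct, one_apply, he.eq_iff] using congrFun hxy (e j)
  have h := hH.conjTranspose_mul_mul hinj
  rwa [conjTranspose_submatrix_id_mul_mul, conjTranspose_one, Matrix.one_mul, Matrix.mul_one] at h

theorem norm_dotProduct_mulVec_le (hH : IsPosDef H) (x y : ι → ℤ[i]) :
    (star x ⬝ᵥ H *ᵥ y).norm ≤ (star x ⬝ᵥ H *ᵥ x).re * (star y ⬝ᵥ H *ᵥ y).re := by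
  obtain rfl | hx := eq_or_ne x 0
  · simp
  refine sub_nonneg.1 (nonneg_of_mul_nonneg_right ?_ (hH.pos x hx))
  have h := hH.nonneg ((star x ⬝ᵥ H *ᵥ x) • y - (star x ⬝ᵥ H *ᵥ y) • x)
  rw [dotProduct_mulVec_smul_sub_smul hH.isHermitian, star_mul_self_eq_norm,
    dotProduct_mulVec_eq_intCast_re hH.isHermitian x,
    dotProduct_mulVec_eq_intCast_re hH.isHermitian y] at h
  norm_cast at h
  rwa [mul_comm (star y ⬝ᵥ H *ᵥ y).re] at h

theorem diag_eq_intCast (hH : IsPosDef H) (i : ι) : H i i = ((H i i).re : ℤ[i]) :=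
  eq_intCast_re_of_star_eq (hH.isHermitian.apply i i)

theorem norm_diag (hH : IsPosDef H) (i : ι) : (H i i).norm = (H i i).re ^ 2 := by
  rw [hH.diag_eq_intCast i, Zsqrtd.norm_intCast, Zsqrtd.re_intCast, sq]

theorem diag_pos (hH : IsPosDef H) (i : ι) : 0 < (H i i).re := by
  classical
  rw [← star_single_dotProduct_mulVec_single H i i]
  exact hH.pos _ (by simp)

theorem norm_apply_le (hH : IsPosDef H) (i j : ι) : (H i j).norm ≤ (H i i).re * (H j j).re := by
  classical
  simpa only [star_single_dotProduct_mulVec_single] using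
    hH.norm_dotProduct_mulVec_le (Pi.single i 1) (Pi.single j 1)

theorem det_ne_zero [DecidableEq ι] (hH : IsPosDef H) : H.det ≠ 0 := by
  intro hdet
  obtain ⟨x, hx, hHx⟩ := Matrix.exists_mulVec_eq_zero_iff.2 hdet
  simpa [hHx] using hH.pos x hx

end IsPosDef

end PosDef

section SchurComplement

variable {R ι : Type*} [CommRing R]

theorem toBlocks₂₂_eq_smul_one (H : Matrix (ι ⊕ Unit) (ι ⊕ Unit) R) :
    H.toBlocks₂₂ = H (.inr ()) (.inr ()) • 1 := by
  ext
  simp [toBlocks₂₂]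

/-- The Schur complement of the last diagonal entry `m` of `H`, multiplied by `m` so that its
entries stay in `R`. -/
def scaledSchur (H : Matrix (ι ⊕ Unit) (ι ⊕ Unit) R) : Matrix ι ι R :=
  H (.inr ()) (.inr ()) • H.toBlocks₁₁ - H.toBlocks₁₂ * H.toBlocks₂₁

variable [Fintype ι]

theorem fromBlocks_zero_one_conj [StarRing R] (H : Matrix (ι ⊕ Unit) (ι ⊕ Unit) R)
    (V : Matrix ι ι R) (c : Matrix Unit ι R) :
    (fromBlocks V 0 c 1)ᴴ * H * fromBlocks V 0 c 1 =
      fromBlocks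
        (Vᴴ * H.toBlocks₁₁ * V + cᴴ * H.toBlocks₂₁ * V + Vᴴ * H.toBlocks₁₂ * c
          + H (.inr ()) (.inr ()) • (cᴴ * c))
        (Vᴴ * H.toBlocks₁₂ + H (.inr ()) (.inr ()) • cᴴ)
        (H.toBlocks₂₁ * V + H (.inr ()) (.inr ()) • c)
        (H (.inr ()) (.inr ()) • 1) := by
  conv_lhs => rw [← fromBlocks_toBlocks H]
  rw [fromBlocks_conjTranspose, fromBlocks_multiply, fromBlocks_multiply, toBlocks₂₂_eq_smul_one]
  simp only [Matrix.add_mul, Matrix.mul_smul, Matrix.mul_one, Matrix.smul_mul, Matrix.mul_zero,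
    zero_add, conjTranspose_zero, Matrix.zero_mul, conjTranspose_one, Matrix.one_mul,
    fromBlocks_inj, and_self, and_true]
  abel

theorem scaledSchur_fromBlocks_zero_one_conj [StarRing R] (H : Matrix (ι ⊕ Unit) (ι ⊕ Unit) R)
    (V : Matrix ι ι R) (c : Matrix Unit ι R) :
    scaledSchur ((fromBlocks V 0 c 1)ᴴ * H * fromBlocks V 0 c 1) = Vᴴ * scaledSchur H * V := by
  rw [fromBlocks_zero_one_conj, scaledSchur, scaledSchur]
  simp only [toBlocks_fromBlocks₁₁, toBlocks_fromBlocks₁₂, toBlocks_fromBlocks₂₁,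
    fromBlocks_apply₂₂, Matrix.smul_apply, one_apply_eq, smul_eq_mul, mul_one, smul_add,
    Matrix.mul_assoc, Matrix.mul_add, Matrix.add_mul, Matrix.smul_mul, Matrix.mul_smul,
    Matrix.mul_sub, Matrix.sub_mul]
  abel

variable [DecidableEq ι]

/-- The column operations that multiply the other columns of `H` by its last diagonal entry and then
clear the last row off the diagonal. -/
def clearLastRow (H : Matrix (ι ⊕ Unit) (ι ⊕ Unit) R) :
    Matrix (ι ⊕ Unit) (ι ⊕ Unit) R :=
  fromBlocks (H (.inr ()) (.inr ()) • 1) 0 (-H.toBlocks₂₁) 1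

theorem mul_clearLastRow (H : Matrix (ι ⊕ Unit) (ι ⊕ Unit) R) :
    H * clearLastRow H = fromBlocks (scaledSchur H) H.toBlocks₁₂ 0 H.toBlocks₂₂ := by
  conv_lhs => rw [← fromBlocks_toBlocks H]
  rw [clearLastRow, fromBlocks_multiply]
  simp [toBlocks₂₂_eq_smul_one, scaledSchur, sub_eq_add_neg]

theorem det_clearLastRow (H : Matrix (ι ⊕ Unit) (ι ⊕ Unit) R) :
    (clearLastRow H).det = H (.inr ()) (.inr ()) ^ Fintype.card ι := by
  simp [clearLastRow]

theorem det_mul_last_pow_card (H : Matrix (ι ⊕ Unit) (ι ⊕ Unit) R) :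
    H.det * H (.inr ()) (.inr ()) ^ Fintype.card ι =
      (scaledSchur H).det * H (.inr ()) (.inr ()) := by
  have h := congrArg det (mul_clearLastRow H)
  rw [det_mul, det_clearLastRow, det_fromBlocks_zero₂₁, det_unique H.toBlocks₂₂] at h
  exact h

theorem toBlocks₁₁_clearLastRow_conj [StarRing R] (H : Matrix (ι ⊕ Unit) (ι ⊕ Unit) R) :
    ((clearLastRow H)ᴴ * H * clearLastRow H).toBlocks₁₁ =
      star (H (.inr ()) (.inr ())) • scaledSchur H := by
  rw [Matrix.mul_assoc, mul_clearLastRow, clearLastRow, fromBlocks_conjTranspose,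
    fromBlocks_multiply, toBlocks_fromBlocks₁₁]
  simp

end SchurComplement

section Reduction

variable {ι κ : Type*} [Fintype ι] [Fintype κ]

theorem IsPosDef.of_intCast_smul {H : Matrix ι ι ℤ[i]} {m : ℤ} (hm : 0 < m)
    (hH : IsPosDef ((m : ℤ[i]) • H)) : IsPosDef H where
  isHermitian := by
    have h := hH.isHermitian.eq
    rw [conjTranspose_smul, star_intCast] at h
    exact smul_right_injective _ (Int.cast_ne_zero.2 hm.ne') h
  pos x hx := by
    have h := hH.pos x hx
    rw [smul_mulVec, dotProduct_smul, smul_eq_mul, Zsqrtd.re_smul] at h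
    exact pos_of_mul_pos_right h hm.le

theorem IsPosDef.scaledSchur_diag_re {H : Matrix (ι ⊕ Unit) (ι ⊕ Unit) ℤ[i]} (hH : IsPosDef H)
    (i : ι) : (scaledSchur H i i).re =
      (H (.inr ()) (.inr ())).re * (H (.inl i) (.inl i)).re - (H (.inl i) (.inr ())).norm := by
  have hcol : H (.inr ()) (.inl i) = star (H (.inl i) (.inr ())) := (hH.isHermitian.apply _ _).symm
  rw [scaledSchur, Matrix.sub_apply, Matrix.smul_apply, Matrix.mul_apply, Fintype.sum_unique,
    smul_eq_mul, toBlocks₁₁, toBlocks₁₂, toBlocks₂₁, of_apply, of_apply, of_apply, hcol,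
    ← Zsqrtd.norm_eq_mul_conj, hH.diag_eq_intCast (.inr ()), Zsqrtd.re_sub, Zsqrtd.re_smul,
    Zsqrtd.re_intCast, Zsqrtd.re_intCast]

theorem prod_mul_le_of_mul_le {R : Type*} [CommRing R] [LinearOrder R] [IsStrictOrderedRing R]
    {C D E M : R} {x s : ι → R} (hM : 0 < M) (hx : ∀ i, 0 ≤ x i)
    (hxs : ∀ i, M * x i ≤ 4 * s i) (hs : ∏ i, s i ≤ C * E)
    (hDE : D * M ^ Fintype.card ι = E * M) :
    (∏ i, x i) * M ≤ 4 ^ Fintype.card ι * C * D := by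
  have hprod : M ^ Fintype.card ι * ∏ i, x i ≤ 4 ^ Fintype.card ι * ∏ i, s i := by
    simpa [Finset.prod_mul_distrib] using
      Finset.prod_le_prod (s := Finset.univ) (fun i _ => mul_nonneg hM.le (hx i))
        (fun i _ => hxs i)
  refine le_of_mul_le_mul_left ?_ (pow_pos hM (Fintype.card ι))
  calc M ^ Fintype.card ι * ((∏ i, x i) * M)
      = (M ^ Fintype.card ι * ∏ i, x i) * M := by ring
    _ ≤ (4 ^ Fintype.card ι * ∏ i, s i) * M := by gcongr
    _ ≤ (4 ^ Fintype.card ι * (C * E)) * M := by gcongr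
    _ = M ^ Fintype.card ι * (4 ^ Fintype.card ι * C * D) := by
        linear_combination -(4 ^ Fintype.card ι * C) * hDE

theorem isPosDef_scaledSchur {H : Matrix (ι ⊕ Unit) (ι ⊕ Unit) ℤ[i]} (hH : IsPosDef H) :
    IsPosDef (scaledSchur H) := by
  classical
  have hm : 0 < (H (.inr ()) (.inr ())).re := hH.diag_pos _
  have hm0 : H (.inr ()) (.inr ()) ≠ 0 := fun h => by simp [h] at hm
  have hinj : Function.Injective (clearLastRow H).mulVec := by
    refine mulVec_injective_of_det_ne_zero ?_
    rw [det_clearLastRow]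
    exact pow_ne_zero _ hm0
  have h : IsPosDef ((clearLastRow H)ᴴ * H * clearLastRow H).toBlocks₁₁ :=
    (hH.conjTranspose_mul_mul hinj).submatrix Sum.inl_injective
  rw [toBlocks₁₁_clearLastRow_conj, hH.isHermitian.apply, hH.diag_eq_intCast] at h
  exact h.of_intCast_smul hm

variable [DecidableEq ι] [DecidableEq κ]

theorem IsPosDef.conj_of_isUnit_det {H U : Matrix ι ι ℤ[i]} (hH : IsPosDef H)
    (hU : IsUnit U.det) : IsPosDef (Uᴴ * H * U) :=
  hH.conjTranspose_mul_mul
    (mulVec_injective_of_isUnit ((isUnit_iff_isUnit_det U).2 hU))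

theorem norm_det_conj {H U : Matrix ι ι ℤ[i]} (hU : IsUnit U.det) :
    (Uᴴ * H * U).det.norm = H.det.norm := by
  have hnorm : U.det.norm = 1 := (Zsqrtd.norm_eq_one_iff' (by norm_num) _).2 hU
  rw [det_mul, det_mul, det_conjTranspose, Zsqrtd.norm_mul, Zsqrtd.norm_mul, Zsqrtd.norm_conj,
    hnorm, one_mul, mul_one]

/-- `H j j` is the least value of the form `H` on vectors that belong to a basis of the
lattice. -/
def IsMinimalAt (H : Matrix ι ι ℤ[i]) (j : ι) : Prop :=
  ∀ V : Matrix ι ι ℤ[i], IsUnit V.det → ∀ i, (H j j).re ≤ ((Vᴴ * H * V) i i).re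

theorem IsPosDef.exists_isMinimalAt {H : Matrix ι ι ℤ[i]} (hH : IsPosDef H) (j : ι) :
    ∃ U : Matrix ι ι ℤ[i], IsUnit U.det ∧ IsMinimalAt (Uᴴ * H * U) j := by
  obtain ⟨_, ⟨U, hU, i, rfl⟩, hmin⟩ := Int.exists_least_of_bdd
    (P := fun m => ∃ U : Matrix ι ι ℤ[i], IsUnit U.det ∧ ∃ i, ((Uᴴ * H * U) i i).re = m)
    ⟨0, fun _ ⟨U, hU, i, hi⟩ => hi ▸ ((hH.conj_of_isUnit_det hU).diag_pos i).le⟩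
    ⟨_, 1, by simp, j, rfl⟩
  have hswap : IsUnit (U.submatrix id (Equiv.swap i j)).det := by
    rw [det_permute']
    exact ((Units.isUnit _).map (Int.castRingHom ℤ[i])).mul hU
  refine ⟨U.submatrix id (Equiv.swap i j), hswap, fun V hV l => ?_⟩
  rw [conjTranspose_submatrix_id_mul_mul, submatrix_apply, Equiv.swap_apply_right,
    ← conjTranspose_submatrix_id_mul_mul]
  refine hmin _ ⟨U.submatrix id (Equiv.swap i j) * V, by rw [det_mul]; exact hswap.mul hV, l, ?_⟩
  simp only [conjTranspose_mul, Matrix.mul_assoc]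

/-- Some constant bounds the orthogonality defect of a suitable basis of every positive definite
Hermitian lattice over the Gaussian integers of rank `|ι|`. Norms of integers are their squares, so
the defect is measured by its square. -/
def HasReducedBases (ι : Type*) [Fintype ι] [DecidableEq ι] : Prop :=
  ∃ C : ℤ, 0 ≤ C ∧ ∀ H : Matrix ι ι ℤ[i], IsPosDef H →
    ∃ U : Matrix ι ι ℤ[i], IsUnit U.det ∧ ∏ i, ((Uᴴ * H * U) i i).norm ≤ C * H.det.norm

theorem HasReducedBases.of_equiv (e : ι ≃ κ) (h : HasReducedBases ι) : HasReducedBases κ := by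
  obtain ⟨C, hC, h⟩ := h
  refine ⟨C, hC, fun H hH => ?_⟩
  obtain ⟨U, hU, hdefect⟩ := h _ (hH.submatrix e.injective)
  refine ⟨U.submatrix e.symm e.symm, by rwa [det_submatrix_equiv_self], ?_⟩
  have hconj : (U.submatrix e.symm e.symm)ᴴ * H * U.submatrix e.symm e.symm =
      (Uᴴ * H.submatrix e e * U).submatrix e.symm e.symm := by
    simp [← submatrix_mul_equiv _ _ e.symm e.symm e.symm]
  rw [hconj]
  simp only [submatrix_apply]
  rwa [e.symm.prod_comp fun i => ((Uᴴ * H.submatrix e e * U) i i).norm,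
    ← det_submatrix_equiv_self e H]

/-- Size reduction: subtracting multiples of the last, shortest basis vector makes the last column
at most `m² / 2` in norm, so that the scaled Schur complement keeps half of the diagonal. -/
theorem IsPosDef.exists_norm_mul_norm_diag_le {H : Matrix (ι ⊕ Unit) (ι ⊕ Unit) ℤ[i]}
    (hH : IsPosDef H) (hmin : IsMinimalAt H (.inr ())) {V : Matrix ι ι ℤ[i]}
    (hV : IsUnit V.det) :
    ∃ W : Matrix (ι ⊕ Unit) (ι ⊕ Unit) ℤ[i], IsUnit W.det ∧
      (Wᴴ * H * W) (.inr ()) (.inr ()) = H (.inr ()) (.inr ()) ∧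
      ∀ i, (H (.inr ()) (.inr ())).norm * ((Wᴴ * H * W) (.inl i) (.inl i)).norm ≤
        4 * ((Vᴴ * scaledSchur H * V) i i).norm := by
  have hm0 := hH.diag_pos (.inr ())
  choose c hc using fun i => exists_two_mul_norm_add_mul_le hm0 ((Vᴴ * H.toBlocks₁₂) i ())
  set W := fromBlocks V 0 (of fun _ i => star (c i)) (1 : Matrix Unit Unit ℤ[i]) with hW
  have hWdet : IsUnit W.det := by simpa [hW] using hV
  have hcorner : (Wᴴ * H * W) (.inr ()) (.inr ()) = H (.inr ()) (.inr ()) := by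
    simp [hW, fromBlocks_zero_one_conj]
  have hPos := hH.conj_of_isUnit_det hWdet
  refine ⟨W, hWdet, hcorner, fun i => ?_⟩
  have hcol : 2 * ((Wᴴ * H * W) (.inl i) (.inr ())).norm ≤ (H (.inr ()) (.inr ())).re ^ 2 := by
    simpa [hW, fromBlocks_zero_one_conj, ← hH.diag_eq_intCast] using hc i
  have hschur := hPos.scaledSchur_diag_re i
  rw [hcorner, hW, scaledSchur_fromBlocks_zero_one_conj, ← hW] at hschur
  have hdiag := hmin W hWdet (.inl i)
  rw [hH.norm_diag, hPos.norm_diag, ((isPosDef_scaledSchur hH).conj_of_isUnit_det hV).norm_diag,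
    ← mul_pow, show (4 : ℤ) = 2 ^ 2 by norm_num, ← mul_pow]
  refine pow_le_pow_left₀ (mul_nonneg hm0.le (hPos.diag_pos _).le) ?_ 2
  nlinarith

theorem HasReducedBases.sum_unit (h : HasReducedBases ι) : HasReducedBases (ι ⊕ Unit) := by
  obtain ⟨C, hC, h⟩ := h
  refine ⟨4 ^ Fintype.card ι * C, by positivity, fun H₀ hH₀ => ?_⟩
  obtain ⟨U, hU, hmin⟩ := hH₀.exists_isMinimalAt (.inr ())
  rw [← norm_det_conj hU]
  have hH := hH₀.conj_of_isUnit_det hU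
  set H := Uᴴ * H₀ * U with hHdef
  obtain ⟨V, hV, hdefect⟩ := h _ (isPosDef_scaledSchur hH)
  obtain ⟨W, hW, hcorner, hdiag⟩ := hH.exists_norm_mul_norm_diag_le hmin hV
  have hconj : (U * W)ᴴ * H₀ * (U * W) = Wᴴ * H * W := by
    simp only [hHdef, conjTranspose_mul, Matrix.mul_assoc]
  refine ⟨U * W, by rw [det_mul]; exact hU.mul hW, ?_⟩
  rw [hconj, Fintype.prod_sum_type, Fintype.prod_unique (ι := Unit), hcorner]
  refine prod_mul_le_of_mul_le ?_ (fun i => GaussianInt.norm_nonneg _) hdiag hdefect ?_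
  · rw [hH.norm_diag]
    exact pow_pos (hH.diag_pos _) 2
  · have hdet := congrArg Zsqrtd.normMonoidHom (det_mul_last_pow_card H)
    rwa [map_mul, map_mul, map_pow] at hdet

theorem hasReducedBases (ι : Type*) [Fintype ι] [DecidableEq ι] : HasReducedBases ι := by
  refine Fintype.induction_empty_option
    (P := fun α _ => ∀ [DecidableEq α], HasReducedBases α) ?of_equiv ?empty ?option ι
  case of_equiv =>
    intro α β _ e hα _
    classical
    let := Fintype.ofEquiv β e.symm
    exact HasReducedBases.of_equiv e hα
  case empty => exact ⟨1, zero_le_one, fun H _ => ⟨1, by simp, by simp⟩⟩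
  case option =>
    intro α _ hα _
    classical
    exact hα.sum_unit.of_equiv (Equiv.optionEquivSumPUnit α).symm

theorem exists_norm_diag_le (ι : Type*) [Fintype ι] [DecidableEq ι] (D : ℤ) :
    ∃ B : ℤ, ∀ H : Matrix ι ι ℤ[i], IsPosDef H → H.det.norm ≤ D →
      ∃ U : Matrix ι ι ℤ[i], IsUnit U.det ∧ ∀ i, ((Uᴴ * H * U) i i).norm ≤ B := by
  obtain ⟨C, hC, h⟩ := hasReducedBases ι
  refine ⟨C * D, fun H hH hD => ?_⟩
  obtain ⟨U, hU, hdefect⟩ := h H hH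
  have hpos (j : ι) : 0 < ((Uᴴ * H * U) j j).norm := by
    rw [(hH.conj_of_isUnit_det hU).norm_diag]
    exact pow_pos ((hH.conj_of_isUnit_det hU).diag_pos j) 2
  refine ⟨U, hU, fun i => ?_⟩
  calc ((Uᴴ * H * U) i i).norm ≤ ∏ j, ((Uᴴ * H * U) j j).norm :=
        Int.le_of_dvd (Finset.prod_pos fun j _ => hpos j)
          (Finset.dvd_prod_of_mem _ (Finset.mem_univ i))
    _ ≤ C * H.det.norm := hdefect
    _ ≤ C * D := by gcongr

end Reduction

section Isometries

variable {R ι : Type*} [CommRing R] [StarRing R] [Fintype ι] [DecidableEq ι]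

theorem conjTranspose_mul_nonsing_inv_mul_mul {Q U V : Matrix ι ι R} (hV : IsUnit V.det)
    (hQ : Uᴴ * Q * U = Vᴴ * Q * V) : (U * V⁻¹)ᴴ * Q * (U * V⁻¹) = Q :=
  calc (U * V⁻¹)ᴴ * Q * (U * V⁻¹) = (V⁻¹)ᴴ * (Uᴴ * Q * U) * V⁻¹ := by
        simp only [conjTranspose_mul, Matrix.mul_assoc]
    _ = (V * V⁻¹)ᴴ * Q * (V * V⁻¹) := by
        rw [hQ]
        simp only [conjTranspose_mul, Matrix.mul_assoc]
    _ = Q := by rw [mul_nonsing_inv V hV, conjTranspose_one, Matrix.one_mul, Matrix.mul_one]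

theorem exists_isometry_mulVec_eq [IsDomain R] {Q U V : Matrix ι ι R} {x y : ι → R}
    (hdet : Q.det ≠ 0) (hU : IsUnit U.det) (hV : IsUnit V.det)
    (hQ : Uᴴ * Q * U = Vᴴ * Q * V) (hw : Uᴴ *ᵥ (Q *ᵥ x) = Vᴴ *ᵥ (Q *ᵥ y)) :
    ∃ g : Matrix ι ι R, IsUnit g.det ∧ gᴴ * Q * g = Q ∧ g *ᵥ y = x := by
  refine ⟨U * V⁻¹, ?_, conjTranspose_mul_nonsing_inv_mul_mul hV hQ, ?_⟩
  · rw [det_mul]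
    exact hU.mul (isUnit_nonsing_inv_det V hV)
  · have hinj : Function.Injective (Uᴴ * Q).mulVec := by
      refine mulVec_injective_of_det_ne_zero ?_
      rw [det_mul, det_conjTranspose]
      exact mul_ne_zero hU.star.ne_zero hdet
    apply hinj
    calc (Uᴴ * Q) *ᵥ ((U * V⁻¹) *ᵥ y) = (Vᴴ * Q * V * V⁻¹) *ᵥ y := by
          rw [mulVec_mulVec, ← Matrix.mul_assoc, hQ]
      _ = Vᴴ *ᵥ (Q *ᵥ y) := by rw [mul_nonsing_inv_cancel_right _ _ hV, mulVec_mulVec]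
      _ = (Uᴴ * Q) *ᵥ x := by rw [← hw, mulVec_mulVec]

end Isometries

section Majorant

variable {R ι κ : Type*} [CommRing R] [Fintype ι]

theorem smul_one_add_two_smul_vecMulVec_sq [DecidableEq ι] {k : R} {u w : ι → R}
    (h : w ⬝ᵥ u = -k) : (k • (1 : Matrix ι ι R) + (2 : R) • vecMulVec u w) ^ 2 = (k ^ 2) • 1 := by
  have hsq : vecMulVec u w * vecMulVec u w = -k • vecMulVec u w := by
    rw [vecMulVec_mul_vecMulVec, h, vecMulVec_smul]
  simp only [sq, Matrix.mul_add, Matrix.add_mul, Matrix.smul_mul, Matrix.mul_smul, hsq,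
    Matrix.one_mul, Matrix.mul_one]
  module

variable [StarRing R]

/-- The Hermitian form `v ↦ k Q[v] + 2 |⟨x, v⟩|²`, where `⟨x, v⟩ = x* Q v`. When `Q[x] = -k` it is
`k` times the majorant of `Q` that changes the sign of `Q` on the line spanned by `x`; the factor
`k` keeps the entries in `R`. -/
def majorant (Q : Matrix ι ι R) (k : ℤ) (x : ι → R) : Matrix ι ι R :=
  (k : R) • Q + (2 : R) • vecMulVec (Q *ᵥ x) (star (Q *ᵥ x))

theorem isHermitian_majorant {Q : Matrix ι ι R} (hQ : Q.IsHermitian) (k : ℤ) (x : ι → R) :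
    (majorant Q k x).IsHermitian := by
  rw [IsHermitian, majorant, conjTranspose_add, conjTranspose_smul, conjTranspose_smul, hQ.eq,
    conjTranspose_vecMulVec, star_star, star_intCast, star_ofNat]

theorem dotProduct_majorant_mulVec {Q : Matrix ι ι R} (hQ : Q.IsHermitian) (k : ℤ)
    (x v : ι → R) :
    star v ⬝ᵥ majorant Q k x *ᵥ v =
      k * (star v ⬝ᵥ Q *ᵥ v) + 2 * (star (star x ⬝ᵥ Q *ᵥ v) * (star x ⬝ᵥ Q *ᵥ v)) := by
  have hdual : star (Q *ᵥ x) ⬝ᵥ v = star x ⬝ᵥ Q *ᵥ v := by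
    rw [star_mulVec, hQ.eq, dotProduct_mulVec]
  rw [majorant, add_mulVec, smul_mulVec, smul_mulVec, vecMulVec_mulVec, dotProduct_add,
    dotProduct_smul, dotProduct_smul, hdual, star_star_dotProduct_mulVec hQ]
  simp [mul_comm]

theorem conjTranspose_mul_majorant_mul (Q : Matrix ι ι R) (k : ℤ) (x : ι → R)
    (U : Matrix ι κ R) :
    Uᴴ * majorant Q k x * U =
      (k : R) • (Uᴴ * Q * U) + (2 : R) • vecMulVec (Uᴴ *ᵥ (Q *ᵥ x)) (star (Uᴴ *ᵥ (Q *ᵥ x))) := by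
  rw [majorant, Matrix.mul_add, Matrix.add_mul, Matrix.mul_smul, Matrix.smul_mul, Matrix.mul_smul,
    Matrix.smul_mul, mul_vecMulVec, vecMulVec_mul, star_mulVec Uᴴ, conjTranspose_conjTranspose]

variable [DecidableEq ι]

theorem majorant_eq_mul (Q : Matrix ι ι R) (k : ℤ) (x : ι → R) :
    majorant Q k x = Q * ((k : R) • 1 + (2 : R) • vecMulVec x (star (Q *ᵥ x))) := by
  rw [majorant, Matrix.mul_add, Matrix.mul_smul, Matrix.mul_smul, mul_vecMulVec, Matrix.mul_one]

theorem det_majorant_sq {Q : Matrix ι ι R} (hQ : Q.IsHermitian) {k : ℤ} {x : ι → R}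
    (hx : star x ⬝ᵥ Q *ᵥ x = -(k : R)) :
    (majorant Q k x).det ^ 2 = Q.det ^ 2 * ((k : R) ^ 2) ^ Fintype.card ι := by
  have hxx : star (Q *ᵥ x) ⬝ᵥ x = -(k : R) := by
    rw [star_mulVec, hQ.eq, ← dotProduct_mulVec, hx]
  rw [majorant_eq_mul, det_mul, mul_pow, ← det_pow (_ + _), smul_one_add_two_smul_vecMulVec_sq hxx,
    det_smul, det_one, mul_one]

end Majorant

section Lorentzian

variable {ι : Type*} [Fintype ι] {Q : Matrix ι ι ℤ[i]}

/-- Hermitian forms over the Gaussian integers that are positive definite on the orthogonal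
complement of every negative vector. A nondegenerate form has this property iff it is positive
definite or of signature `(n, 1)`. -/
structure IsLorentzian (Q : Matrix ι ι ℤ[i]) : Prop where
  isHermitian : Q.IsHermitian
  pos_of_orthogonal : ∀ x v, (star x ⬝ᵥ Q *ᵥ x).re < 0 → star x ⬝ᵥ Q *ᵥ v = 0 → v ≠ 0 →
    0 < (star v ⬝ᵥ Q *ᵥ v).re

theorem isLorentzian_of_pos_on_ker (hQ : Q.IsHermitian) (ℓ : (ι → ℤ[i]) →ₗ[ℤ[i]] ℤ[i])
    (hker : ∀ v, ℓ v = 0 → v ≠ 0 → 0 < (star v ⬝ᵥ Q *ᵥ v).re) : IsLorentzian Q where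
  isHermitian := hQ
  pos_of_orthogonal x v hx hxv hv := by
    by_cases hℓv : ℓ v = 0
    · exact hker v hℓv hv
    have hcomb : 0 ≤ (ℓ x).norm * (star v ⬝ᵥ Q *ᵥ v).re +
        (ℓ v).norm * (star x ⬝ᵥ Q *ᵥ x).re := by
      have hu : ℓ (ℓ x • v - ℓ v • x) = 0 := by
        rw [map_sub, map_smul, map_smul, smul_eq_mul, smul_eq_mul, mul_comm, sub_self]
      have hform := congrArg Zsqrtd.re
        (dotProduct_mulVec_smul_sub_smul_of_orthogonal hQ hxv (ℓ x) (ℓ v))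
      rw [star_mul_self_eq_norm, star_mul_self_eq_norm, Zsqrtd.re_add, Zsqrtd.re_smul,
        Zsqrtd.re_smul] at hform
      rw [← hform]
      obtain h | h := eq_or_ne (ℓ x • v - ℓ v • x) 0
      · simp [h]
      · exact (hker _ hu h).le
    have hneg := mul_neg_of_pos_of_neg (GaussianInt.norm_pos.2 hℓv) hx
    exact pos_of_mul_pos_right (by linarith) (GaussianInt.norm_nonneg (ℓ x))

theorem isLorentzian_of_toBlocks₁₁ {Q : Matrix (ι ⊕ Unit) (ι ⊕ Unit) ℤ[i]} (hQ : Q.IsHermitian)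
    (hQ₁₁ : IsPosDef Q.toBlocks₁₁) : IsLorentzian Q := by
  refine isLorentzian_of_pos_on_ker hQ (LinearMap.proj (.inr ())) fun v hv hv0 => ?_
  obtain ⟨u, rfl⟩ : ∃ u : ι → ℤ[i], v = Sum.elim u 0 :=
    ⟨v ∘ .inl, by ext1 (_ | _); exacts [rfl, hv]⟩
  have hform : star (Sum.elim u 0) ⬝ᵥ Q *ᵥ Sum.elim u 0 = star u ⬝ᵥ Q.toBlocks₁₁ *ᵥ u := by
    simp [dotProduct, mulVec, toBlocks₁₁]
  rw [hform]
  exact hQ₁₁.pos u fun hu => hv0 (by rw [hu]; ext1 (_ | _) <;> rfl)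

namespace IsLorentzian

theorem nonneg_of_orthogonal (hQ : IsLorentzian Q) {x v : ι → ℤ[i]}
    (hx : (star x ⬝ᵥ Q *ᵥ x).re < 0) (hxv : star x ⬝ᵥ Q *ᵥ v = 0) :
    0 ≤ (star v ⬝ᵥ Q *ᵥ v).re := by
  obtain rfl | hv := eq_or_ne v 0
  · simp
  · exact (hQ.pos_of_orthogonal x v hx hxv hv).le

variable {k : ℤ} {x : ι → ℤ[i]}

theorem norm_le_majorant (hQ : IsLorentzian Q) (hk : 0 < k)
    (hx : star x ⬝ᵥ Q *ᵥ x = -(k : ℤ[i])) (v : ι → ℤ[i]) :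
    (star x ⬝ᵥ Q *ᵥ v).norm ≤ (star v ⬝ᵥ majorant Q k x *ᵥ v).re := by
  have hneg : (star x ⬝ᵥ Q *ᵥ x).re < 0 := by simpa [hx] using hk
  have hproj := hQ.nonneg_of_orthogonal hneg
    (v := (star x ⬝ᵥ Q *ᵥ x) • v - (star x ⬝ᵥ Q *ᵥ v) • x)
    (by simp [mulVec_sub, mulVec_smul, mul_comm])
  rw [dotProduct_mulVec_smul_sub_smul hQ.isHermitian, star_mul_self_eq_norm, hx,
    dotProduct_mulVec_eq_intCast_re hQ.isHermitian v] at hproj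
  rw [dotProduct_majorant_mulVec hQ.isHermitian, star_mul_self_eq_norm,
    dotProduct_mulVec_eq_intCast_re hQ.isHermitian v]
  norm_cast at hproj ⊢
  refine le_of_mul_le_mul_left ?_ hk
  rw [Zsqrtd.re_intCast] at hproj ⊢
  linarith

theorem isPosDef_majorant (hQ : IsLorentzian Q) (hk : 0 < k)
    (hx : star x ⬝ᵥ Q *ᵥ x = -(k : ℤ[i])) : IsPosDef (majorant Q k x) where
  isHermitian := isHermitian_majorant hQ.isHermitian k x
  pos v hv := by
    by_cases hxv : star x ⬝ᵥ Q *ᵥ v = 0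
    · have hneg : (star x ⬝ᵥ Q *ᵥ x).re < 0 := by simpa [hx] using hk
      rw [dotProduct_majorant_mulVec hQ.isHermitian, hxv, star_zero, zero_mul, mul_zero, add_zero,
        Zsqrtd.re_smul]
      exact mul_pos hk (hQ.pos_of_orthogonal x v hneg hxv hv)
    · exact (GaussianInt.norm_pos.2 hxv).trans_le (hQ.norm_le_majorant hk hx v)

theorem norm_conjTranspose_mulVec_le (hQ : IsLorentzian Q) (hk : 0 < k)
    (hx : star x ⬝ᵥ Q *ᵥ x = -(k : ℤ[i])) (U : Matrix ι ι ℤ[i]) (i : ι) :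
    ((Uᴴ *ᵥ (Q *ᵥ x)) i).norm ≤ ((Uᴴ * majorant Q k x * U) i i).re := by
  classical
  have hcol : (Uᴴ *ᵥ (Q *ᵥ x)) i = star (star x ⬝ᵥ Q *ᵥ (U *ᵥ Pi.single i 1)) := by
    rw [star_star_dotProduct_mulVec hQ.isHermitian, star_mulVec, ← dotProduct_mulVec,
      ← Pi.single_star]
    simp
  rw [hcol, Zsqrtd.norm_conj, ← star_single_dotProduct_mulVec_single (Uᴴ * majorant Q k x * U),
    ← star_mulVec_dotProduct_mulVec]
  exact hQ.norm_le_majorant hk hx _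

variable [DecidableEq ι]

theorem det_ne_zero (hQ : IsLorentzian Q) (hk : 0 < k)
    (hx : star x ⬝ᵥ Q *ᵥ x = -(k : ℤ[i])) : Q.det ≠ 0 := by
  have h := (hQ.isPosDef_majorant hk hx).det_ne_zero
  rw [majorant_eq_mul, det_mul] at h
  exact left_ne_zero_of_mul h

end IsLorentzian

theorem norm_det_majorant [DecidableEq ι] (hQ : Q.IsHermitian) {k : ℤ} {x : ι → ℤ[i]}
    (hx : star x ⬝ᵥ Q *ᵥ x = -(k : ℤ[i])) :
    (majorant Q k x).det.norm = Q.det.norm * (k ^ 2) ^ Fintype.card ι := by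
  have h := congrArg Zsqrtd.norm (det_majorant_sq hQ hx)
  rw [← Int.cast_pow, ← Int.cast_pow, Zsqrtd.norm_mul, Zsqrtd.norm_intCast, sq (det _),
    sq (det _), Zsqrtd.norm_mul, Zsqrtd.norm_mul, mul_mul_mul_comm] at h
  exact (mul_self_inj (GaussianInt.norm_nonneg _)
    (mul_nonneg (GaussianInt.norm_nonneg _) (by positivity))).1 h

end Lorentzian

section Finiteness

theorem finite_setOf_isPosDef_norm_diag_le (ι : Type*) [Fintype ι] (B : ℤ) :
    {H : Matrix ι ι ℤ[i] | IsPosDef H ∧ ∀ i, (H i i).norm ≤ B}.Finite := by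
  refine (Set.Finite.pi' fun _ => Set.Finite.pi' fun _ => finite_setOf_norm_le B).subset ?_
  rintro H ⟨hH, hB⟩ i j
  have hi := hB i
  have hj := hB j
  rw [hH.norm_diag] at hi hj
  exact (hH.norm_apply_le i j).trans (by linarith [two_mul_le_add_sq (H i i).re (H j j).re])

theorem exists_finset_of_forall_mem_exists {α β : Type*} {R : Set α} {S : Set β} (hS : S.Finite)
    {r : α → β → Prop} (h : ∀ x ∈ R, ∃ s ∈ S, r x s) :
    ∃ F : Finset α, ↑F ⊆ R ∧ ∀ x ∈ R, ∃ y ∈ F, ∃ s, r x s ∧ r y s := by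
  have : Finite {s // s ∈ S ∧ ∃ y ∈ R, r y s} := (hS.subset fun _ hs => hs.1).to_subtype
  choose y hyR hy using fun s : {s // s ∈ S ∧ ∃ y ∈ R, r y s} => s.2.2
  refine ⟨(Set.finite_range y).toFinset, ?_, fun x hx => ?_⟩
  · rw [Set.Finite.coe_toFinset]
    exact Set.range_subset_iff.2 hyR
  · obtain ⟨s, hs, hxs⟩ := h x hx
    exact ⟨y ⟨s, hs, x, hx, hxs⟩, by simp, s, hxs, hy _⟩

variable {ι : Type*} [Fintype ι] [DecidableEq ι] {Q : Matrix ι ι ℤ[i]} {k : ℤ}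

theorem IsLorentzian.exists_finite_reduced (hQ : IsLorentzian Q) (hk : 0 < k) :
    ∃ S : Set (Matrix ι ι ℤ[i] × (ι → ℤ[i])), S.Finite ∧
      ∀ x, star x ⬝ᵥ Q *ᵥ x = -(k : ℤ[i]) → ∃ U : Matrix ι ι ℤ[i], IsUnit U.det ∧
        (Uᴴ * majorant Q k x * U, Uᴴ *ᵥ (Q *ᵥ x)) ∈ S := by
  obtain ⟨B, hB⟩ := exists_norm_diag_le ι (Q.det.norm * (k ^ 2) ^ Fintype.card ι)
  refine ⟨_, (finite_setOf_isPosDef_norm_diag_le ι B).prod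
    (Set.Finite.pi' fun _ => finite_setOf_norm_le B), fun x hx => ?_⟩
  have hpos := hQ.isPosDef_majorant hk hx
  obtain ⟨U, hU, hdiag⟩ := hB _ hpos (norm_det_majorant hQ.isHermitian hx).le
  have hUpos := hpos.conj_of_isUnit_det hU
  refine ⟨U, hU, ⟨hUpos, hdiag⟩, fun i => ?_⟩
  calc ((Uᴴ *ᵥ (Q *ᵥ x)) i).norm ≤ ((Uᴴ * majorant Q k x * U) i i).re :=
        hQ.norm_conjTranspose_mulVec_le hk hx U i
    _ ≤ ((Uᴴ * majorant Q k x * U) i i).re ^ 2 := Int.le_self_sq _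
    _ = ((Uᴴ * majorant Q k x * U) i i).norm := (hUpos.norm_diag i).symm
    _ ≤ B := hdiag i

theorem finitely_many_orbits_gaussian_general (hQ : IsLorentzian Q) (hk : 0 < k) :
    ∃ F : Finset (ι → ℤ[i]), (∀ y ∈ F, star y ⬝ᵥ Q *ᵥ y = -(k : ℤ[i])) ∧
      ∀ x : ι → ℤ[i], star x ⬝ᵥ Q *ᵥ x = -(k : ℤ[i]) →
        ∃ y ∈ F, ∃ g : Matrix ι ι ℤ[i], IsUnit g.det ∧ gᴴ * Q * g = Q ∧ g *ᵥ y = x := by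
  obtain ⟨S, hS, hred⟩ := hQ.exists_finite_reduced hk
  obtain ⟨F, hFR, hF⟩ := exists_finset_of_forall_mem_exists
    (R := {x | star x ⬝ᵥ Q *ᵥ x = -(k : ℤ[i])}) hS
    (r := fun x s => ∃ U : Matrix ι ι ℤ[i], IsUnit U.det ∧
      (Uᴴ * majorant Q k x * U, Uᴴ *ᵥ (Q *ᵥ x)) = s)
    fun x hx => let ⟨U, hU, hUS⟩ := hred x hx; ⟨_, hUS, U, hU, rfl⟩
  refine ⟨F, hFR, fun x hx => ?_⟩
  obtain ⟨y, hy, _, ⟨U, hU, rfl⟩, V, hV, hVU⟩ := hF x hx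
  obtain ⟨hmajorant, hdual⟩ := Prod.mk.inj hVU.symm
  refine ⟨y, hy, exists_isometry_mulVec_eq (hQ.det_ne_zero hk hx) hU hV ?_ hdual⟩
  rw [conjTranspose_mul_majorant_mul, conjTranspose_mul_majorant_mul, hdual, add_left_inj]
    at hmajorant
  exact smul_right_injective _ (Int.cast_ne_zero.2 hk.ne') hmajorant

end Finiteness

/-- The action of `Γ_Q` on `R(Q,−k)` by left multiplication has only finitely many
orbits: there is a finite subset `F` of `R(Q,−k)` such that every `x ∈ R(Q,−k)`
equals `g · y` for some `g ∈ Γ_Q` and some `y ∈ F`. Here `Q = diag(A, -a)` with `A`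
an `n × n` positive definite Hermitian matrix over the Gaussian integers `ℤ[i]` and
`a` a positive integer; `Γ_Q = {g ∈ GL(n+1, ℤ[i]) : g* Q g = Q}`. -/
theorem finitely_many_orbits_gaussian (n : ℕ) (hn : 1 ≤ n)
    (A : Matrix (Fin n) (Fin n) GaussianInt) (hAherm : Aᴴ = A)
    (hApos : ∀ x : Fin n → GaussianInt, x ≠ 0 → 0 < (star x ⬝ᵥ A.mulVec x).re)
    (a : ℤ) (ha : 0 < a) (k : ℤ) (hk : 0 < k)
    (Q : Matrix (Fin n ⊕ Unit) (Fin n ⊕ Unit) GaussianInt)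
    (hQ : Q = Matrix.fromBlocks A 0 0 (Matrix.of fun _ _ => -(a : GaussianInt))) :
    ∃ F : Finset ((Fin n ⊕ Unit) → GaussianInt),
      (∀ y ∈ F, star y ⬝ᵥ Q.mulVec y = -(k : GaussianInt)) ∧
      ∀ x : (Fin n ⊕ Unit) → GaussianInt, star x ⬝ᵥ Q.mulVec x = -(k : GaussianInt) →
        ∃ y ∈ F, ∃ g : Matrix (Fin n ⊕ Unit) (Fin n ⊕ Unit) GaussianInt,
          IsUnit g.det ∧ gᴴ * Q * g = Q ∧ g.mulVec y = x := by
  subst hQ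
  have hherm :=
    IsHermitian.fromBlocks (D := of fun _ _ : Unit => -(a : ℤ[i])) hAherm conjTranspose_zero
      (by ext1; simp)
  exact finitely_many_orbits_gaussian_general
    (isLorentzian_of_toBlocks₁₁ hherm ⟨hAherm, hApos⟩) hk
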